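/- Let T = (T_1,…,T_k) ∈ B(H)^{n_1} ×_c ⋯ ×_c B(H)^{n_k} be such that Φ_{f_i,T_i}(I) ≤ I for every i, and let m = (m_1,…,m_k) ∈ ℕ^k. If m_1 Φ_{f_1,T_1}(I) + ⋯ + m_k Φ_{f_k,T_k}(I) ≤ I, then T ∈ D_f^m(H). -/

import Mathlib

open Filter Topology
open scoped InnerProductSpace Topology

noncomputable section

namespace NC

variable {H : Type*} [NormedAddCommGroup H] [InnerProductSpace ℂ H] [CompleteSpace H]

/-- The operator `X_w = X_{j_1} ⋯ X_{j_p}` associated with a word `w ∈ F_d⁺`. -/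
def listProd {d : ℕ} (X : Fin d → (H →L[ℂ] H)) (w : List (Fin d)) : H →L[ℂ] H :=
  (w.map X).prod

/-- `T_{1,β_1} ⋯ T_{k,β_k}` for a `k`-tuple of words `(β_1, …, β_k)`. -/
def tupleWord {k : ℕ} {n : Fin k → ℕ} (T : ∀ i, Fin (n i) → (H →L[ℂ] H))
    (w : ∀ i, List (Fin (n i))) : H →L[ℂ] H :=
  (List.ofFn fun i => listProd (T i) (w i)).prod

/-- the entries of `T_p` commute with the entries of `T_q` for `p ≠ q` -/
def CommutingTuples {k : ℕ} {n : Fin k → ℕ} (T : ∀ i, Fin (n i) → (H →L[ℂ] H)) : Prop :=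
  ∀ i j, i ≠ j → ∀ p q, Commute (T i p) (T j q)

/-- coefficients of a positive regular free holomorphic function in `d` noncommuting
indeterminates:  nonnegative coefficients, zero constant term, nonzero linear
coefficients, and finite radius-type limsup condition. -/
def PosRegCoeffs {d : ℕ} (c : List (Fin d) → ℝ) : Prop :=
  (∀ w, 0 ≤ c w) ∧ c [] = 0 ∧ (∀ j, 0 < c [j]) ∧
    ∃ C : ℝ, ∀ᶠ l : ℕ in atTop,
      (∑ w : Fin l → Fin d, (c (List.ofFn w)) ^ 2) ^ ((1 : ℝ) / (2 * l)) ≤ C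

/-- partial sums of `Φ_{f,X}(Y) = Σ_{|w| ≥ 1} c_w X_w Y X_w^*` over words of length `≤ N` -/
def phiPartial {d : ℕ} (c : List (Fin d) → ℝ) (X : Fin d → (H →L[ℂ] H))
    (Y : H →L[ℂ] H) (N : ℕ) : H →L[ℂ] H :=
  ∑ l ∈ Finset.Icc 1 N, ∑ w : Fin l → Fin d,
    ((c (List.ofFn w) : ℝ) : ℂ) •
      (listProd X (List.ofFn w) * Y * ContinuousLinearMap.adjoint (listProd X (List.ofFn w)))

/-- `Φ` is the map `Φ_{f,X}`, i.e. the WOT limit of the partial sums of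
`Σ_{|w| ≥ 1} c_w X_w Y X_w^*`, for every `Y`. -/
def IsPhiMap {d : ℕ} (c : List (Fin d) → ℝ) (X : Fin d → (H →L[ℂ] H))
    (Φ : Module.End ℂ (H →L[ℂ] H)) : Prop :=
  ∀ (Y : H →L[ℂ] H) (x y : H),
    Tendsto (fun N => ⟪(phiPartial c X Y N) x, y⟫_ℂ) atTop (𝓝 ⟪(Φ Y) x, y⟫_ℂ)

/-- `Δ_Φ^p := (id − Φ_1)^{p_1} ∘ ⋯ ∘ (id − Φ_k)^{p_k}` -/
def Delta {k : ℕ} (Φ : Fin k → Module.End ℂ (H →L[ℂ] H)) (p : Fin k → ℕ) :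
    Module.End ℂ (H →L[ℂ] H) :=
  (List.ofFn fun i => (1 - Φ i) ^ (p i)).prod

/-- `(id − Φ_1^{q_1}) ∘ ⋯ ∘ (id − Φ_k^{q_k})` -/
def DeltaPow {k : ℕ} (Φ : Fin k → Module.End ℂ (H →L[ℂ] H)) (q : Fin k → ℕ) :
    Module.End ℂ (H →L[ℂ] H) :=
  (List.ofFn fun i => 1 - (Φ i) ^ (q i)).prod

/-- membership in the noncommutative polydomain `D_f^m(H)`:  the coordinate tuples
commute with each other, the maps `Φ_{f_i,T_i}` are defined (as WOT limits),
`Φ_{f_i,T_i}(I) ≤ I`, and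
`(id−Φ_{f_1,T_1})^{ε_1 m_1} ⋯ (id−Φ_{f_k,T_k})^{ε_k m_k}(I) ≥ 0` for all `ε_i ∈ {0,1}`. -/
def MemPolydomain {k : ℕ} {n : Fin k → ℕ} (a : ∀ i, List (Fin (n i)) → ℝ)
    (m : Fin k → ℕ) (T : ∀ i, Fin (n i) → (H →L[ℂ] H)) : Prop :=
  CommutingTuples T ∧
  ∃ Φ : Fin k → Module.End ℂ (H →L[ℂ] H),
    (∀ i, IsPhiMap (a i) (T i) (Φ i)) ∧
    (∀ i, ((1 : H →L[ℂ] H) - Φ i 1).IsPositive) ∧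
    (∀ ε : Fin k → Bool, ((Delta Φ fun i => if ε i then m i else 0) 1).IsPositive)

/-- purity of a tuple `T`, expressed through its `Φ`-maps:
`(id−Φ_k^{q_k}) ⋯ (id−Φ_1^{q_1})(I) → I`. -/
def IsPure {k : ℕ} (Φ : Fin k → Module.End ℂ (H →L[ℂ] H)) : Prop :=
  ∀ x : H, Tendsto (fun q : Fin k → ℕ => ((DeltaPow Φ q) 1) x) atTop (𝓝 x)

end NC

namespace NC

/-- Finite partial sums of `Φ_{f,X}` send positive operators to positive operators. -/
theorem phiPartial_nonneg {H : Type*} [NormedAddCommGroup H] [InnerProductSpace ℂ H]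
    [CompleteSpace H] {d : ℕ} {c : List (Fin d) → ℝ} (hc : ∀ w, 0 ≤ c w)
    (X : Fin d → (H →L[ℂ] H)) {Y : H →L[ℂ] H} (hY : 0 ≤ Y) (N : ℕ) :
    0 ≤ phiPartial c X Y N := by
  refine Finset.sum_nonneg fun l _ => Finset.sum_nonneg fun w _ => ?_
  rw [ContinuousLinearMap.nonneg_iff_isPositive] at hY ⊢
  refine ContinuousLinearMap.IsPositive.smul_of_nonneg ?_ (by exact_mod_cast hc _)
  exact hY.conj_adjoint _

open scoped ComplexOrder in
/-- The map `Φ_{f,X}` is positive. -/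
theorem IsPhiMap.map_nonneg {H : Type*} [NormedAddCommGroup H] [InnerProductSpace ℂ H]
    [CompleteSpace H] {d : ℕ} {c : List (Fin d) → ℝ} (hc : ∀ w, 0 ≤ c w)
    {X : Fin d → (H →L[ℂ] H)} {Φ : Module.End ℂ (H →L[ℂ] H)} (hΦ : IsPhiMap c X Φ)
    {Y : H →L[ℂ] H} (hY : 0 ≤ Y) : 0 ≤ Φ Y := by
  have key (x : H) : 0 ≤ ⟪Φ Y x, x⟫_ℂ :=
    ge_of_tendsto' (hΦ Y x x) fun N =>
      ((ContinuousLinearMap.nonneg_iff_isPositive _).1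
        (phiPartial_nonneg hc X hY N)).inner_nonneg_left x
  rw [ContinuousLinearMap.nonneg_iff_isPositive, ContinuousLinearMap.isPositive_iff_complex]
  exact fun x => ⟨(Complex.eq_re_of_ofReal_le (r := 0) (by simpa using key x)).symm,
    (Complex.nonneg_iff.1 (key x)).1⟩

/-- The union bound `∏ (1 - φ) e ≥ e - ∑ φ e` for positive, not necessarily commuting, linear
maps whose sum is a contraction at `e`. -/
theorem prod_one_sub_bounds {R E : Type*} [Ring R] [AddCommGroup E] [PartialOrder E]
    [IsOrderedAddMonoid E] [Module R E] {e : E} (he : 0 ≤ e) (L : List (Module.End R E))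
    (hL : ∀ φ ∈ L, ∀ y, 0 ≤ y → 0 ≤ φ y) (hsum : (L.map fun φ => φ e).sum ≤ e) :
    e - (L.map fun φ => φ e).sum ≤ (L.map fun φ : Module.End R E => 1 - φ).prod e ∧
      (L.map fun φ : Module.End R E => 1 - φ).prod e ≤ e := by
  induction L with
  | nil => simp
  | cons φ L ih =>
    simp only [List.map_cons, List.sum_cons, List.prod_cons, Module.End.mul_apply,
      LinearMap.sub_apply, Module.End.one_apply] at hsum ⊢
    have hφ := hL φ (by simp)
    have hsum' : (L.map fun φ => φ e).sum ≤ e :=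
      (le_add_of_nonneg_left (hφ e he)).trans hsum
    obtain ⟨hlow, hup⟩ := ih (fun ψ hψ => hL ψ (List.mem_cons_of_mem _ hψ)) hsum'
    set A := (L.map fun φ : Module.End R E => 1 - φ).prod e
    have hA : 0 ≤ A := (sub_nonneg.2 hsum').trans hlow
    have hmono : φ A ≤ φ e := by
      simpa [map_sub] using hφ (e - A) (sub_nonneg.2 hup)
    refine ⟨?_, (sub_le_self _ (hφ A hA)).trans hup⟩
    calc e - (φ e + (L.map fun φ => φ e).sum)
        = (e - (L.map fun φ => φ e).sum) - φ e := by abel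
      _ ≤ A - φ A := sub_le_sub hlow hmono

/-- The list of the maps `Φ_1, …, Φ_k`, in which `Φ_i` is repeated `p_i` times. -/
def repeatedMaps {E : Type*} {k : ℕ} (Φ : Fin k → E) (p : Fin k → ℕ) : List E :=
  (List.ofFn fun i => List.replicate (p i) (Φ i)).flatten

/-- **Proposition 1.7(iii) (Popescu).**  Let `T = (T_1, …, T_k)` be a tuple with mutually
commuting coordinate tuples such that each `Φ_{f_i,T_i}` is defined and
`Φ_{f_i,T_i}(I) ≤ I`, and let `m = (m_1, …, m_k) ∈ ℕ^k`.  If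
`m_1 Φ_{f_1,T_1}(I) + ⋯ + m_k Φ_{f_k,T_k}(I) ≤ I`, then `T ∈ D_f^m(H)`. -/
theorem stmt_5 {H : Type*} [NormedAddCommGroup H] [InnerProductSpace ℂ H] [CompleteSpace H]
    {k : ℕ} {n : Fin k → ℕ} (hn : ∀ i, 1 ≤ n i) {m : Fin k → ℕ} (hm : ∀ i, 1 ≤ m i)
    (a : ∀ i, List (Fin (n i)) → ℝ) (ha : ∀ i, PosRegCoeffs (a i))
    (T : ∀ i, Fin (n i) → (H →L[ℂ] H)) (hT : CommutingTuples T)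
    (Φ : Fin k → Module.End ℂ (H →L[ℂ] H))
    (hΦ : ∀ i, IsPhiMap (a i) (T i) (Φ i))
    (hcontr : ∀ i, ((1 : H →L[ℂ] H) - Φ i 1).IsPositive)
    (hsum : ((1 : H →L[ℂ] H) - ∑ i, (m i : ℂ) • (Φ i 1)).IsPositive) :
    MemPolydomain a m T := by
  refine ⟨hT, Φ, hΦ, hcontr, fun ε => ?_⟩
  have hpos (i : Fin k) (Y : H →L[ℂ] H) (hY : 0 ≤ Y) : 0 ≤ Φ i Y :=
    (hΦ i).map_nonneg (ha i).1 hY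
  have hone : (0 : H →L[ℂ] H) ≤ 1 :=
    (ContinuousLinearMap.nonneg_iff_isPositive _).2 ContinuousLinearMap.isPositive_one
  set p : Fin k → ℕ := fun i => if ε i then m i else 0 with hp
  have hLsum : ((repeatedMaps Φ p).map fun φ => φ 1).sum ≤ (1 : H →L[ℂ] H) := by
    have hle : ∑ i, (m i : ℂ) • Φ i 1 ≤ (1 : H →L[ℂ] H) := hsum
    refine le_trans ?_ hle
    rw [repeatedMaps, List.map_flatten, List.sum_flatten, List.map_ofFn, List.map_ofFn,
      List.sum_ofFn]
    refine Finset.sum_le_sum fun i _ => ?_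
    simp only [Function.comp_apply, List.map_replicate, List.sum_replicate, Nat.cast_smul_eq_nsmul]
    refine nsmul_le_nsmul_left (hpos i 1 hone) ?_
    simp only [hp]
    split_ifs <;> simp
  have hprod : Delta Φ p = ((repeatedMaps Φ p).map fun φ => 1 - φ).prod := by
    rw [repeatedMaps, List.map_flatten, List.prod_flatten, List.map_ofFn, List.map_ofFn, Delta]
    simp [Function.comp_def]
  have hmem : ∀ φ ∈ repeatedMaps Φ p, ∀ Y, 0 ≤ Y → 0 ≤ φ Y := by
    intro φ hφ
    obtain ⟨l, hl, hφl⟩ := List.mem_flatten.1 hφ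
    obtain ⟨i, rfl⟩ := (List.mem_ofFn' _ _).1 hl
    rw [List.eq_of_mem_replicate hφl]
    exact hpos i
  rw [← ContinuousLinearMap.nonneg_iff_isPositive, hprod]
  exact (sub_nonneg.2 hLsum).trans (prod_one_sub_bounds hone _ hmem hLsum).1

end NC
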